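/- arXiv:2002.12053 — 2 statements merged into one kernel-verified Lean document; each statement's English description precedes it below -/
import Mathlib

section
/- Assume A is a reduced Noetherian ring. Let B ⊇ R be a finitely generated G-graded R-algebra, M a finitely generated G-graded B-module, E a finitely generated G-graded R-submodule of M, and H a finitely generated G-graded A-submodule of M (i.e., [H]_ν ⊆ [M]_ν for all ν ∈ G). Set 𝔐 = M/(E + H). Then there exists an element a ∈ A avoiding all minimal primes of A such that 𝔐_a = 𝔐 ⊗_A A_a is a projective A_a-module. -/
/-!
This is the Hochster–Roberts form of generic freeness, and it holds without any grading. Write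
`R` for the polynomial ring and call an `A`-module *generically projective* (`GenProj`) if it
becomes projective after inverting some `a` outside all minimal primes of `A`.

Three facts carry the argument.

* A finitely generated `A`-module `N` is generically projective (`genProj_of_finite`): since `A`
  is reduced, its localization at a minimal prime is a field, so the free locus of `N`, which is
  open, contains all minimal primes; prime avoidance then yields a basic open subset of the free
  locus that contains them as well.
* If `L ≤ C 0 ≤ C 1 ≤ ⋯` exhausts `M` and `C 0 / L` and all `C (n + 1) / C n` become projective
  after inverting one and the same `a`, then so does `M / L` (`ProjAt.of_chain`), because all the
  steps split after localization.
* Suppose all finitely generated `R`-modules are generically projective, with `R` Noetherian, and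
  let `M` be a finitely generated `R[X]`-module, generated by a finitely generated `R`-submodule
  `F ⊇ L`. Put `C n = F + X F + ⋯ + X ^ n F`. Then `C (n + 1) / C n` is `F / K n`, where the `K n`
  form an increasing chain of `R`-submodules of `F`. The chain is eventually constant, so only
  finitely many quotients occur and one `a` serves for all of them. Thus the generic projectivity
  of `M / L` follows from that of `F / L` (`GenProjRing.descends_polynomial`).

The last fact says that the question for `(M, L)` descends from `R[X]` to `R`. The relation
`Descends` is transitive and passes to quotients of the upper ring, so it holds for every algebra
of finite type over `R`. Descending from `B` to `R` reduces `M / (E + H)` to `F / (E + H)` with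
`F` finitely generated over `R`; this is a quotient of the finitely generated `R`-module `F / E`
by a finitely generated `A`-submodule, and descending from `R` to `A` reduces it to finitely
generated `A`-modules.
-/

open MvPolynomial

section

open TensorProduct

/-! ### Chains with projective quotients -/

/-- A module exhausted by a chain `Y 0 ↪ Y 1 ↪ ⋯` with `Y 0` and all the successive quotients
`Q n = Y (n + 1) / Y n` projective is projective: it is isomorphic to `Y 0 × ⨁ n, Q n`. The chain
is given by maps rather than by submodules, so that it can be base changed directly. -/
theorem projective_of_chain {S : Type} [CommRing S] {X : Type} [AddCommGroup X] [Module S X]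
    (Y Q : ℕ → Type) [∀ n, AddCommGroup (Y n)] [∀ n, Module S (Y n)]
    [∀ n, AddCommGroup (Q n)] [∀ n, Module S (Q n)]
    (i : ∀ n, Y n →ₗ[S] Y (n + 1)) (g : ∀ n, Y (n + 1) →ₗ[S] Q n) (j : ∀ n, Y n →ₗ[S] X)
    (hg : ∀ n, Function.Surjective (g n)) (hig : ∀ n, Function.Exact (i n) (g n))
    (hj : ∀ n, Function.Injective (j n)) (hji : ∀ n y, j (n + 1) (i n y) = j n y)
    (hcov : ∀ x, ∃ n y, j n y = x)
    [Module.Projective S (Y 0)] [∀ n, Module.Projective S (Q n)] :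
    Module.Projective S X := by
  classical
  choose s hs using fun n => Module.projective_lifting_property (g n) LinearMap.id (hg n)
  replace hs : ∀ n q, g n (s n q) = q := fun n q => LinearMap.congr_fun (hs n) q
  have hgi : ∀ n y, g n (i n y) = 0 := fun n y => (hig n _).2 ⟨y, rfl⟩
  have hi : ∀ n y, i n y = 0 → y = 0 := fun n y h => by
    apply hj n
    rw [← hji, h, map_zero, map_zero]
  let Φ : (Y 0 × Π₀ n, Q n) →ₗ[S] X :=
    LinearMap.coprod (j 0) (DFinsupp.lsum ℕ fun n => j (n + 1) ∘ₗ s n)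
  have hΦ : ∀ y f, Φ (y, f) = j 0 y + DFinsupp.lsum ℕ (fun n => j (n + 1) ∘ₗ s n) f :=
    fun y f => rfl
  have hsurj : Function.Surjective Φ := by
    rw [← LinearMap.range_eq_top, eq_top_iff]
    rintro x -
    obtain ⟨n, y, rfl⟩ := hcov x
    induction n with
    | zero => exact ⟨(y, 0), by simp [hΦ]⟩
    | succ n ih =>
      -- modulo the previous step, `y` agrees with the lift of its class in `Q n`
      obtain ⟨z, hz⟩ := (hig n (y - s n (g n y))).1 (by rw [map_sub, hs, sub_self])
      have : j (n + 1) y = j n z + Φ (0, DFinsupp.single n (g n y)) := by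
        rw [hΦ, ← hji n z, hz]
        simp
      rw [this]
      exact add_mem (ih z) ⟨_, rfl⟩
  have hinj : Function.Injective Φ := by
    rw [injective_iff_map_eq_zero]
    rintro ⟨y, f⟩ h
    -- partial sums of `Φ (y, f)`, taken inside the successive `Y m`
    let p : ∀ m, Y m := fun m => Nat.rec y (fun m pm => i m pm + s m (f m)) m
    have hp : ∀ m, p (m + 1) = i m (p m) + s m (f m) := fun m => rfl
    have hsum : ∀ m, j m (p m) = j 0 y + ∑ n ∈ Finset.range m, j (n + 1) (s n (f n)) := by
      intro m
      induction m with
      | zero => simp [p]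
      | succ m ih => rw [hp, map_add, hji, ih, Finset.sum_range_succ, add_assoc]
    have hdown : ∀ m, p m = 0 → y = 0 ∧ ∀ n < m, f n = 0 := by
      intro m
      induction m with
      | zero => exact fun h => ⟨h, by simp⟩
      | succ m ih =>
        intro h
        have hf : f m = 0 := by
          have := congrArg (g m) h
          rwa [hp, map_add, hgi, hs, zero_add, map_zero] at this
        have hpm : p m = 0 := hi m _ (by rwa [hp, hf, map_zero, add_zero] at h)
        obtain ⟨h1, h2⟩ := ih hpm
        refine ⟨h1, fun n hn => ?_⟩
        rcases Nat.lt_succ_iff_lt_or_eq.1 hn with hn | rfl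
        exacts [h2 n hn, hf]
    obtain ⟨m, hm⟩ : ∃ m, ∀ n, m ≤ n → f n = 0 := by
      refine ⟨f.support.sup id + 1, fun n hn => ?_⟩
      by_contra hne
      have := Finset.le_sup (f := id) (DFinsupp.mem_support_iff.2 hne)
      simp only [id] at this
      omega
    have hpm : p m = 0 := by
      apply hj m
      rw [hsum, map_zero, ← h, hΦ]
      congr 1
      rw [DFinsupp.lsum_apply_apply, DFinsupp.sumAddHom_apply, DFinsupp.sum]
      symm
      refine Finset.sum_subset (fun n hn => ?_) (fun n _ hn => ?_)
      · by_contra hc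
        exact DFinsupp.mem_support_iff.1 hn (hm n (by simpa using hc))
      · rw [DFinsupp.notMem_support_iff.1 hn]; simp
    obtain ⟨h1, h2⟩ := hdown m hpm
    ext n
    · exact h1
    · rcases lt_or_ge n m with hn | hn
      exacts [h2 n hn, hm n hn]
  exact Module.Projective.of_equiv (LinearEquiv.ofBijective Φ ⟨hinj, hsurj⟩)

/-! ### Projectivity after inverting an element -/

/-- `N` becomes projective after inverting `a`. The localization of `N` is encoded as
`A_a ⊗ N`; `projAt_iff` compares this with `LocalizedModule`. -/
def ProjAt {A : Type} [CommRing A] (a : A) (N : Type) [AddCommGroup N] [Module A N] : Prop :=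
  Module.Projective (Localization.Away a) (Localization.Away a ⊗[A] N)

theorem projAt_iff {A : Type} [CommRing A] (a : A) (N : Type) [AddCommGroup N] [Module A N] :
    ProjAt a N ↔ Module.Projective (Localization.Away a)
      (LocalizedModule (Submonoid.powers a) N) := by
  have e := (IsLocalizedModule.isBaseChange (Submonoid.powers a) (Localization.Away a)
    (LocalizedModule.mkLinearMap (Submonoid.powers a) N)).equiv
  exact ⟨fun h => by unfold ProjAt at h; exact Module.Projective.of_equiv e,
    fun h => Module.Projective.of_equiv e.symm⟩

theorem ProjAt.congr {A : Type} [CommRing A] {a : A} {N N' : Type} [AddCommGroup N] [Module A N]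
    [AddCommGroup N'] [Module A N'] (h : ProjAt a N) (e : N ≃ₗ[A] N') : ProjAt a N' := by
  unfold ProjAt at *
  exact Module.Projective.of_equiv (e.baseChange A (Localization.Away a) N N')

theorem ProjAt.mul_right {A : Type} [CommRing A] {a : A} {N : Type} [AddCommGroup N] [Module A N]
    (h : ProjAt a N) (b : A) : ProjAt (a * b) N := by
  unfold ProjAt at *
  let : Algebra (Localization.Away a) (Localization.Away (a * b)) :=
    (IsLocalization.Away.awayToAwayRight a b).toAlgebra
  have : IsScalarTower A (Localization.Away a) (Localization.Away (a * b)) :=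
    IsScalarTower.of_algebraMap_eq fun x => (IsLocalization.Away.awayToAwayRight_eq a b x).symm
  exact Module.Projective.of_equiv (AlgebraTensorModule.cancelBaseChange A (Localization.Away a)
    (Localization.Away (a * b)) (Localization.Away (a * b)) N)

theorem ProjAt.of_dvd {A : Type} [CommRing A] {a b : A} {N : Type} [AddCommGroup N] [Module A N]
    (h : ProjAt a N) (hab : a ∣ b) : ProjAt b N := by
  obtain ⟨c, rfl⟩ := hab
  exact h.mul_right c

/-- If `L ≤ C 0 ≤ C 1 ≤ ⋯` exhausts `M`, and `C 0 / L` and all `C (n + 1) / C n` become projective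
after inverting `a`, then so does `M / L`. -/
theorem ProjAt.of_chain {A : Type} [CommRing A] {a : A} {M : Type} [AddCommGroup M] [Module A M]
    (L : Submodule A M) (C : ℕ → Submodule A M) (hC : ∀ n, C n ≤ C (n + 1))
    (hcov : ∀ x, ∃ n, x ∈ C n) (hL : L ≤ C 0)
    (h0 : ProjAt a (C 0 ⧸ L.submoduleOf (C 0)))
    (hs : ∀ n, ProjAt a (C (n + 1) ⧸ (C n).submoduleOf (C (n + 1)))) :
    ProjAt a (M ⧸ L) := by
  have hLC : ∀ n, L ≤ C n := fun n => hL.trans (monotone_nat_of_le_succ hC (Nat.zero_le n))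
  let i : ∀ n, (C n ⧸ L.submoduleOf (C n)) →ₗ[A] (C (n + 1) ⧸ L.submoduleOf (C (n + 1))) :=
    fun n => Submodule.mapQ _ _ (Submodule.inclusion (hC n)) (fun x hx => hx)
  let g : ∀ n, (C (n + 1) ⧸ L.submoduleOf (C (n + 1))) →ₗ[A]
      (C (n + 1) ⧸ (C n).submoduleOf (C (n + 1))) :=
    fun n => Submodule.factor (fun x hx => hLC n hx)
  let j : ∀ n, (C n ⧸ L.submoduleOf (C n)) →ₗ[A] M ⧸ L :=
    fun n => Submodule.mapQ _ _ (C n).subtype (fun x hx => hx)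
  have hj : ∀ n, Function.Injective (j n) := by
    intro n
    rw [injective_iff_map_eq_zero]
    intro x hx
    obtain ⟨x, rfl⟩ := Submodule.Quotient.mk_surjective _ x
    exact (Submodule.Quotient.mk_eq_zero _).2 ((Submodule.Quotient.mk_eq_zero L).1 hx)
  have hji : ∀ n y, j (n + 1) (i n y) = j n y := by
    intro n y
    obtain ⟨y, rfl⟩ := Submodule.Quotient.mk_surjective _ y
    rfl
  have hg : ∀ n, Function.Surjective (g n) := fun n => Submodule.factor_surjective _
  have hig : ∀ n, Function.Exact (i n) (g n) := by
    intro n y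
    obtain ⟨y, rfl⟩ := Submodule.Quotient.mk_surjective _ y
    constructor
    · intro h
      have hy : y ∈ (C n).submoduleOf (C (n + 1)) := (Submodule.Quotient.mk_eq_zero _).1 h
      exact ⟨Submodule.Quotient.mk ⟨y.1, hy⟩, rfl⟩
    · rintro ⟨x, hx⟩
      obtain ⟨x, rfl⟩ := Submodule.Quotient.mk_surjective _ x
      rw [← hx]
      exact (Submodule.Quotient.mk_eq_zero _).2 x.2
  unfold ProjAt at *
  refine projective_of_chain (S := Localization.Away a)
    (fun n => Localization.Away a ⊗[A] (C n ⧸ L.submoduleOf (C n)))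
    (fun n => Localization.Away a ⊗[A] (C (n + 1) ⧸ (C n).submoduleOf (C (n + 1))))
    (fun n => (i n).baseChange _) (fun n => (g n).baseChange _) (fun n => (j n).baseChange _)
    (fun n => LinearMap.lTensor_surjective _ (hg n)) (fun n => lTensor_exact _ (hig n) (hg n))
    (fun n => Module.Flat.lTensor_preserves_injective_linearMap _ (hj n)) ?_ ?_
  · intro n y
    have : (j (n + 1)) ∘ₗ (i n) = j n := LinearMap.ext (hji n)
    rw [← this, LinearMap.baseChange_comp]
    rfl
  · have hup : ∀ n m, n ≤ m → ∀ y, ∃ z, (j m).baseChange (Localization.Away a) z =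
        (j n).baseChange (Localization.Away a) y := by
      intro n m hnm y
      induction m, hnm using Nat.le_induction with
      | base => exact ⟨y, rfl⟩
      | succ m _ ih =>
        obtain ⟨z, hz⟩ := ih
        refine ⟨(i m).baseChange _ z, ?_⟩
        have : (j (m + 1)) ∘ₗ (i m) = j m := LinearMap.ext (hji _)
        rw [← hz, ← this, LinearMap.baseChange_comp]
        rfl
    intro x
    induction x with
    | zero => exact ⟨0, 0, map_zero _⟩
    | tmul c x =>
      obtain ⟨x, rfl⟩ := Submodule.Quotient.mk_surjective _ x
      obtain ⟨n, hn⟩ := hcov x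
      exact ⟨n, c ⊗ₜ Submodule.Quotient.mk ⟨x, hn⟩, rfl⟩
    | add x y hx hy =>
      obtain ⟨n, x, rfl⟩ := hx
      obtain ⟨m, y, rfl⟩ := hy
      obtain ⟨x', hx'⟩ := hup n (max n m) (le_max_left _ _) x
      obtain ⟨y', hy'⟩ := hup m (max n m) (le_max_right _ _) y
      exact ⟨max n m, x' + y', by rw [map_add, hx', hy']⟩

/-- Generic projectivity: `N` becomes projective after inverting some element that lies in no
minimal prime of `A`. -/
def GenProj (A : Type) [CommRing A] (N : Type) [AddCommGroup N] [Module A N] : Prop :=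
  ∃ a : A, (∀ p ∈ minimalPrimes A, a ∉ p) ∧ ProjAt a N

theorem GenProj.congr {A : Type} [CommRing A] {N N' : Type} [AddCommGroup N] [Module A N]
    [AddCommGroup N'] [Module A N'] (h : GenProj A N) (e : N ≃ₗ[A] N') : GenProj A N' :=
  let ⟨a, ha, hN⟩ := h
  ⟨a, ha, hN.congr e⟩

/-- The base case: finitely generated modules over a reduced Noetherian ring. The free locus is open
and contains the minimal primes, since the local rings there are fields. -/
theorem genProj_of_finite (A : Type) [CommRing A] [IsNoetherianRing A] [IsReduced A]
    (N : Type) [AddCommGroup N] [Module A N] [Module.Finite A N] : GenProj A N := by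
  have : Module.FinitePresentation A N := Module.finitePresentation_of_finite A N
  obtain ⟨I, hI⟩ := (PrimeSpectrum.isClosed_iff_zeroLocus_ideal _).1
    (Module.isOpen_freeLocus (R := A) (M := N)).isClosed_compl
  have hfree : ∀ (p) (hp : p ∈ minimalPrimes A),
      (⟨p, hp.1.1⟩ : PrimeSpectrum A) ∈ Module.freeLocus A N := by
    intro p hp
    have := hp.1.1
    have hsub := IsLocalization.subsingleton_primeSpectrum_of_mem_minimalPrimes p hp
      (Localization.AtPrime p)
    let := (PrimeSpectrum.subsingleton_iff_isField_of_isReduced.1 hsub).toField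
    rw [Module.mem_freeLocus]
    exact Module.Free.of_divisionRing _ _
  -- prime avoidance for an ideal `I` that cuts out the complement of the free locus
  have hnot : ¬ (I : Set A) ⊆ ⋃ p ∈ (↑(minimalPrimes.finite_of_isNoetherianRing A).toFinset :
      Set (Ideal A)), (p : Set A) := by
    rw [Ideal.subset_union_prime (f := fun p : Ideal A => p) ⊥ ⊥
      (fun p hp _ _ => ((Set.Finite.mem_toFinset _).1 hp).1.1)]
    rintro ⟨p, hp, hIp⟩
    rw [Set.Finite.mem_toFinset] at hp
    have : (⟨p, hp.1.1⟩ : PrimeSpectrum A) ∈ (Module.freeLocus A N)ᶜ := by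
      rw [hI]; exact hIp
    exact this (hfree p hp)
  obtain ⟨a, haI, ha⟩ := Set.not_subset.1 hnot
  simp only [Set.Finite.coe_toFinset, Set.mem_iUnion, not_exists] at ha
  refine ⟨a, fun p hp => ha p hp, (projAt_iff a N).2 ?_⟩
  refine Module.basicOpen_subset_freeLocus_iff.1 fun q hq => ?_
  by_contra hc
  have : q ∈ PrimeSpectrum.zeroLocus (I : Set A) := hI ▸ hc
  exact hq (this haI)

end

/-! ### Descending generic projectivity to a smaller ring -/

/-- A surjective linear map induces an isomorphism between the quotient by the preimage of a
submodule of the target and the quotient by that submodule. -/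
noncomputable def quotEquivOfComap {A : Type} [CommRing A] {N N' : Type} [AddCommGroup N]
    [Module A N] [AddCommGroup N'] [Module A N'] (f : N →ₗ[A] N') (hf : Function.Surjective f)
    (T : Submodule A N) (T' : Submodule A N') (h : T'.comap f = T) : (N ⧸ T) ≃ₗ[A] (N' ⧸ T') :=
  (Submodule.quotEquivOfEq _ _ (by rw [LinearMap.ker_comp, Submodule.ker_mkQ, h])).trans
    (LinearMap.quotKerEquivOfSurjective (T'.mkQ ∘ₗ f) ((Submodule.mkQ_surjective T').comp hf))

/-- All finitely generated `R`-modules are generically projective over `A`. -/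
def GenProjRing (A R : Type) [CommRing A] [CommRing R] [Algebra A R] : Prop :=
  ∀ (M : Type) [AddCommGroup M] [Module A M] [Module R M] [IsScalarTower A R M]
    [Module.Finite R M], GenProj A M

/-- For finitely generated `S`-modules `M` and `A`-submodules `L` whose `R`-span is finitely
generated, generic projectivity of `M / L` over `A` follows from that of `F / L` for all finitely
generated `R`-submodules `F` of `M` containing `L`. -/
def Descends (A R S : Type) [CommRing A] [CommRing R] [CommRing S] [Algebra A R] [Algebra R S] :
    Prop :=
  ∀ (M : Type) [AddCommGroup M] [Module A M] [Module R M] [Module S M] [IsScalarTower A R M]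
    [IsScalarTower R S M] [Module.Finite S M] (L : Submodule A M),
    (Submodule.span R (L : Set M)).FG →
    (∀ F : Submodule R M, F.FG → L ≤ F.restrictScalars A →
      GenProj A (F ⧸ L.comap (F.subtype.restrictScalars A))) →
    GenProj A (M ⧸ L)

section

variable {A R S T : Type} [CommRing A] [CommRing R] [CommRing S] [CommRing T]
  [Algebra A R] [Algebra R S]

theorem Descends.of_algebraMap_surjective (hf : Function.Surjective (algebraMap R S)) :
    Descends A R S := by
  intro M _ _ _ _ _ _ _ L _ h
  have : Module.Finite R S := Module.Finite.of_surjective (Algebra.linearMap R S) hf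
  have : Module.Finite R M := Module.Finite.trans S M
  refine (h ⊤ Module.Finite.fg_top (fun x _ => trivial)).congr
    (quotEquivOfComap ((⊤ : Submodule R M).subtype.restrictScalars A)
      (fun x => ⟨⟨x, trivial⟩, rfl⟩) _ L rfl)

theorem Descends.of_surjective [Algebra R T] (h : Descends A R S) (f : S →ₐ[R] T)
    (hf : Function.Surjective f) : Descends A R T := by
  intro M _ _ _ _ _ _ _ L hL hF
  let : Module S M := Module.compHom M f.toRingHom
  have hsmul : ∀ (s : S) (m : M), s • m = f s • m := fun _ _ => rfl
  have : IsScalarTower R S M := ⟨fun r s m => by rw [hsmul, map_smul, smul_assoc, hsmul]⟩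
  have : Module.Finite S M := by
    obtain ⟨s, hs⟩ := Module.Finite.fg_top (R := T) (M := M)
    refine ⟨⟨s, eq_top_iff.2 fun m _ => ?_⟩⟩
    have hm : m ∈ Submodule.span T (s : Set M) := hs ▸ trivial
    induction hm using Submodule.span_induction with
    | mem x hx => exact Submodule.subset_span hx
    | zero => exact zero_mem _
    | add x y _ _ hx hy => exact add_mem (hx trivial) (hy trivial)
    | smul t x _ hx =>
      obtain ⟨s, rfl⟩ := hf t
      exact Submodule.smul_mem _ s (hx trivial)
  exact h M L hL hF

theorem Descends.trans [Algebra A S] [IsScalarTower A R S] [Algebra R T] [Algebra S T]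
    [IsScalarTower R S T] (h₁ : Descends A R S) (h₂ : Descends A S T) : Descends A R T := by
  intro M _ _ _ _ _ _ _ L hL hF
  let : Module S M := Module.compHom M (algebraMap S T)
  have hsmul : ∀ (s : S) (m : M), s • m = algebraMap S T s • m := fun _ _ => rfl
  have : IsScalarTower S T M := .of_algebraMap_smul fun s m => rfl
  have : IsScalarTower R S M := .of_algebraMap_smul fun r m => by
    rw [hsmul, ← IsScalarTower.algebraMap_apply, algebraMap_smul]
  have : IsScalarTower A S M := .of_algebraMap_smul fun a m => by
    rw [IsScalarTower.algebraMap_apply A R S, algebraMap_smul, algebraMap_smul]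
  refine h₂ M L ?_ fun F' hF' hLF' => ?_
  · obtain ⟨s, hs⟩ := hL
    refine ⟨s, ?_⟩
    rw [← Submodule.span_span_of_tower R S (L : Set M), ← hs, Submodule.span_span_of_tower]
  · have : Module.Finite S F' := Module.Finite.iff_fg.2 hF'
    refine h₁ F' _ ?_ fun F hFfg hLF => ?_
    · refine Submodule.fg_of_fg_map_injective (F'.subtype.restrictScalars R)
        Subtype.val_injective ?_
      rw [Submodule.map_span]
      convert hL
      ext x
      exact ⟨fun ⟨y, hy, hyx⟩ => hyx ▸ hy, fun hx => ⟨⟨x, hLF' hx⟩, hx, rfl⟩⟩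
    · let F₀ : Submodule R M := F.map (F'.subtype.restrictScalars R)
      have hLF₀ : L ≤ F₀.restrictScalars A := fun x hx =>
        ⟨⟨x, hLF' hx⟩, hLF (x := ⟨x, hLF' hx⟩) hx, rfl⟩
      let e : F →ₗ[A] F₀ :=
        { toFun := fun x => ⟨x.1.1, ⟨x.1, x.2, rfl⟩⟩
          map_add' := fun _ _ => rfl
          map_smul' := fun _ _ => rfl }
      have he : Function.Surjective e := by
        rintro ⟨_, ⟨y, hy, rfl⟩⟩
        exact ⟨⟨y, hy⟩, rfl⟩
      exact (hF F₀ (hFfg.map _) hLF₀).congr (quotEquivOfComap e he _ _ rfl).symm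

/-- The case `L = 0` of `Descends`. -/
theorem Descends.genProjRing [Algebra A S] [IsScalarTower A R S] (h : Descends A R S)
    (hR : GenProjRing A R) : GenProjRing A S := by
  intro M _ _ _ _ _
  let : Module R M := Module.compHom M (algebraMap R S)
  have hsmul : ∀ (s : R) (m : M), s • m = algebraMap R S s • m := fun _ _ => rfl
  have : IsScalarTower R S M := .of_algebraMap_smul fun s m => rfl
  have : IsScalarTower A R M := .of_algebraMap_smul fun a m => by
    rw [hsmul, ← IsScalarTower.algebraMap_apply, algebraMap_smul]
  refine (h M ⊥ ?_ fun F hF _ => ?_).congr (Submodule.quotEquivOfEqBot _ rfl)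
  · rw [Submodule.bot_coe, Submodule.span_zero_singleton]
    exact Submodule.fg_bot
  · have : Module.Finite R F := Module.Finite.iff_fg.2 hF
    refine (hR F).congr (Submodule.quotEquivOfEqBot _ ?_).symm
    rw [Submodule.comap_bot, LinearMap.ker_eq_bot]
    exact Subtype.val_injective

/-- One polynomial variable: `M` is filtered by `F + X F + ⋯ + X ^ n F` for a finitely generated
`R`-submodule `F` containing `L` and generating `M`, and up to isomorphism only finitely many
successive quotients occur. -/
theorem GenProjRing.descends_polynomial [IsNoetherianRing R] (hR : GenProjRing A R) :
    Descends A R (Polynomial R) := by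
  intro M _ _ _ _ _ _ _ L hL hF
  obtain ⟨s, hs⟩ := Module.Finite.fg_top (R := Polynomial R) (M := M)
  -- multiplication by the variable
  let y : M →ₗ[R] M := Algebra.lsmul R R M (Polynomial.X : Polynomial R)
  let F : Submodule R M := Submodule.span R s ⊔ Submodule.span R L
  have hFfg : F.FG := Submodule.FG.sup ⟨s, rfl⟩ hL
  have hLF : L ≤ F.restrictScalars A := fun x hx =>
    Submodule.mem_sup_right (Submodule.subset_span hx)
  let C : ℕ → Submodule R M := fun n => Nat.rec F (fun n Cn => Cn ⊔ F.map (y ^ (n + 1))) n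
  have hC : ∀ n, C (n + 1) = C n ⊔ F.map (y ^ (n + 1)) := fun _ => rfl
  have hCle : ∀ n, C n ≤ C (n + 1) := fun n => le_sup_left
  have hCmono : Monotone C := monotone_nat_of_le_succ hCle
  have hy : ∀ n, (C n).map y ≤ C (n + 1) := by
    intro n
    induction n with
    | zero => rw [hC, zero_add, pow_one]; exact le_sup_right
    | succ n ih =>
      rw [hC n, Submodule.map_sup, hC (n + 1), ← Submodule.map_comp, ← Module.End.mul_eq_comp,
        ← pow_succ']
      exact sup_le_sup_right ih _
  have hcov : ∀ x, ∃ n, x ∈ C n := by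
    intro x
    have hx : x ∈ Submodule.span (Polynomial R) (s : Set M) := hs ▸ trivial
    have hadd : ∀ x y, (∃ n, x ∈ C n) → (∃ n, y ∈ C n) → ∃ n, x + y ∈ C n := by
      rintro x y ⟨n, hn⟩ ⟨m, hm⟩
      exact ⟨max n m, add_mem (hCmono (le_max_left _ _) hn) (hCmono (le_max_right _ _) hm)⟩
    induction hx using Submodule.span_induction with
    | mem x hx => exact ⟨0, Submodule.mem_sup_left (Submodule.subset_span hx)⟩
    | zero => exact ⟨0, zero_mem _⟩
    | add x z _ _ hx hz => exact hadd _ _ hx hz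
    | smul p x _ hx =>
      induction p using Polynomial.induction_on' with
      | add p q hp hq => rw [add_smul]; exact hadd _ _ hp hq
      | monomial k c =>
        have hk : ∃ n, (Polynomial.X : Polynomial R) ^ k • x ∈ C n := by
          induction k with
          | zero => simpa using hx
          | succ k ih =>
            obtain ⟨n, hn⟩ := ih
            refine ⟨n + 1, ?_⟩
            rw [pow_succ', mul_smul]
            exact hy n ⟨_, hn, rfl⟩
        obtain ⟨n, hn⟩ := hk
        refine ⟨n, ?_⟩
        rw [← mul_one c, ← smul_eq_mul, ← Polynomial.smul_monomial,
          Polynomial.monomial_one_right_eq_X_pow, smul_assoc]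
        exact Submodule.smul_mem _ _ hn
  -- `C (n + 1) / C n` is the quotient of `F` by `K n`, and `K` stabilizes since `F` is Noetherian
  let K : ℕ →o Submodule R F :=
    { toFun := fun n => (C n).comap ((y ^ (n + 1)) ∘ₗ F.subtype)
      monotone' := monotone_nat_of_le_succ fun n x hx => by
        have : (y ^ (n + 1 + 1)) x.1 = y ((y ^ (n + 1)) x.1) := by rw [pow_succ' y (n + 1)]; rfl
        rw [Submodule.mem_comap, LinearMap.comp_apply, Submodule.subtype_apply, this]
        exact hy n ⟨_, hx, rfl⟩ }
  have : Module.Finite R F := Module.Finite.iff_fg.2 hFfg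
  obtain ⟨m, hm⟩ := monotone_stabilizes_iff_noetherian.2 (inferInstance : IsNoetherian R F) K
  obtain ⟨b, hb, hbF⟩ := hF F hFfg hLF
  choose c hc hcK using fun n => hR (F ⧸ K n)
  let a := b * ∏ n ∈ Finset.range (m + 1), c n
  have haK : ∀ n, ProjAt a (F ⧸ K n) := by
    have hle : ∀ n ≤ m, ProjAt a (F ⧸ K n) := fun n hn =>
      (hcK n).of_dvd ((Finset.dvd_prod_of_mem c (by simpa using by omega)).mul_left b)
    intro n
    rcases le_total n m with h | h
    · exact hle n h
    · rw [← hm n h]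
      exact hle m le_rfl
  refine ⟨a, fun p hp hap => ?_, ?_⟩
  · have := hp.1.1
    rcases this.mem_or_mem hap with h | h
    · exact hb p hp h
    · obtain ⟨n, _, hn⟩ := (Ideal.IsPrime.prod_mem_iff).1 h
      exact hc n p hp hn
  refine ProjAt.of_chain L (fun n => (C n).restrictScalars A) hCle hcov hLF ?_ fun n => ?_
  · let e : F →ₗ[A] F.restrictScalars A :=
      { toFun := fun x => x
        map_add' := fun _ _ => rfl
        map_smul' := fun _ _ => rfl }
    have he : Function.Surjective e := fun x => ⟨x, rfl⟩
    exact (hbF.of_dvd (Dvd.intro _ rfl)).congr (quotEquivOfComap e he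
      (L.comap (F.subtype.restrictScalars A)) (L.submoduleOf (F.restrictScalars A)) rfl)
  · let e : F →ₗ[A] (C (n + 1)).restrictScalars A :=
      { toFun := fun x => ⟨(y ^ (n + 1)) x, Submodule.mem_sup_right ⟨x, x.2, rfl⟩⟩
        map_add' := fun u v => Subtype.ext (map_add _ _ _)
        map_smul' := fun u v => Subtype.ext
          (((y ^ (n + 1)).restrictScalars A).map_smul u (v : M)) }
    let q := (((C n).restrictScalars A).submoduleOf ((C (n + 1)).restrictScalars A)).mkQ
    have hsurj : Function.Surjective (q ∘ₗ e) := by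
      intro z
      obtain ⟨⟨z, hz⟩, rfl⟩ := Submodule.mkQ_surjective _ z
      obtain ⟨u, hu, _, ⟨v, hv, rfl⟩, rfl⟩ := Submodule.mem_sup.1 hz
      refine ⟨⟨v, hv⟩, (Submodule.Quotient.eq _).2 ?_⟩
      change (y ^ (n + 1)) v - (u + (y ^ (n + 1)) v) ∈ C n
      rw [sub_add_cancel_right]
      exact neg_mem hu
    have hker : (q ∘ₗ e).ker = (K n).restrictScalars A := by
      rw [LinearMap.ker_comp, Submodule.ker_mkQ]
      rfl
    exact (haK n).congr ((Submodule.Quotient.restrictScalarsEquiv A (K n)).symm.trans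
      ((Submodule.quotEquivOfEq _ _ hker.symm).trans
        (LinearMap.quotKerEquivOfSurjective _ hsurj)))

theorem GenProjRing.descends_mvPolynomial [IsNoetherianRing R] (hR : GenProjRing A R) (n : ℕ) :
    Descends A R (MvPolynomial (Fin n) R) := by
  induction n with
  | zero =>
    exact Descends.of_algebraMap_surjective (MvPolynomial.C_surjective (Fin 0))
  | succ n ih =>
    exact (ih.trans (ih.genProjRing hR).descends_polynomial).of_surjective
      (MvPolynomial.finSuccEquiv R n).symm.toAlgHom (AlgEquiv.surjective _)

theorem GenProjRing.descends_of_finiteType [IsNoetherianRing R] (hR : GenProjRing A R)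
    [Algebra.FiniteType R S] : Descends A R S := by
  obtain ⟨n, f, hf⟩ := Algebra.FiniteType.iff_quotient_mvPolynomial''.1
    (inferInstance : Algebra.FiniteType R S)
  exact (hR.descends_mvPolynomial n).of_surjective f hf

end

/-! ### Quotients by a sum of submodules -/

/-- The theorem without gradings, for any tower of algebras `A → R → B` of finite type. -/
theorem genProj_quotient_sup {A R B M : Type} [CommRing A] [IsNoetherianRing A] [IsReduced A]
    [CommRing R] [Algebra A R] [Algebra.FiniteType A R] [CommRing B] [Algebra R B]
    [Algebra.FiniteType R B] [AddCommGroup M] [Module A M] [Module R M] [Module B M]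
    [IsScalarTower A R M] [IsScalarTower R B M] [Module.Finite B M]
    (E : Submodule R M) (hE : E.FG) (H : Submodule A M) (hH : H.FG) :
    GenProj A (M ⧸ (E.restrictScalars A ⊔ H)) := by
  have : IsNoetherianRing R := Algebra.FiniteType.isNoetherianRing A R
  have hA : GenProjRing A A := fun N _ i₁ i₂ _ _ => by
    -- the two `A`-module structures agree because of the scalar tower condition
    have h : i₁ = i₂ := Module.ext' _ _ fun a x => by
      have h := @smul_assoc N A A _ i₂.toSMul i₁.toSMul _ a 1 x
      rw [smul_eq_mul, mul_one, @one_smul A N _ i₂.toMulAction] at h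
      exact h.symm
    subst h
    exact genProj_of_finite A N
  have hAR : Descends A A R := hA.descends_of_finiteType
  have hRB : Descends A R B := (hAR.genProjRing hA).descends_of_finiteType
  refine hRB M _ ?_ fun F hF hLF => ?_
  · have : Submodule.span R ((E.restrictScalars A ⊔ H : Submodule A M) : Set M)
        = E ⊔ Submodule.span R (H : Set M) := by
      refine le_antisymm (Submodule.span_le.2 fun x hx => ?_) (sup_le (fun x hx => ?_) ?_)
      · obtain ⟨u, hu, v, hv, rfl⟩ := Submodule.mem_sup.1 hx
        exact add_mem (Submodule.mem_sup_left hu)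
          (Submodule.mem_sup_right (Submodule.subset_span hv))
      · exact Submodule.subset_span (Submodule.mem_sup_left (S := E.restrictScalars A) hx)
      · exact Submodule.span_mono fun x hx => Submodule.mem_sup_right hx
    rw [this]
    obtain ⟨t, rfl⟩ := hH
    exact hE.sup ⟨t, (Submodule.span_span_of_tower A R (t : Set M)).symm⟩
  · -- pass to the finitely generated `R`-module `F / E`, where only the image of `H` is left
    let q : F →ₗ[A] F ⧸ E.submoduleOf F := (E.submoduleOf F).mkQ.restrictScalars A
    have hq : Function.Surjective q := Submodule.mkQ_surjective (E.submoduleOf F)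
    let HF : Submodule A F := H.comap (F.subtype.restrictScalars A)
    have hHF : HF.FG := by
      refine Submodule.fg_of_fg_map_injective (F.subtype.restrictScalars A)
        Subtype.val_injective ?_
      convert hH
      ext x
      exact ⟨fun ⟨y, hy, hyx⟩ => hyx ▸ hy,
        fun hx => ⟨⟨x, hLF (Submodule.mem_sup_right hx)⟩, hx, rfl⟩⟩
    have : Module.Finite R F := Module.Finite.iff_fg.2 hF
    have key : GenProj A ((F ⧸ E.submoduleOf F) ⧸ HF.map q) := by
      refine hAR (F ⧸ E.submoduleOf F) (HF.map q) ?_ fun F' hF' _ => ?_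
      · rw [Submodule.span_eq]
        exact hHF.map q
      · have : Module.Finite A F' := Module.Finite.iff_fg.2 hF'
        exact genProj_of_finite A _
    refine key.congr (quotEquivOfComap q hq _ _ ?_).symm
    ext x
    constructor
    · rintro ⟨z, hz, hzx⟩
      have h : (z - x : F) ∈ E.submoduleOf F := (Submodule.Quotient.eq _).1 hzx
      have hx : x.1 = -(z.1 - x.1) + z.1 := by abel
      change x.1 ∈ E.restrictScalars A ⊔ H
      rw [hx]
      exact add_mem (Submodule.mem_sup_left (S := E.restrictScalars A) (E.neg_mem h))
        (Submodule.mem_sup_right hz)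
    · intro hx
      obtain ⟨u, hu, v, hv, huv⟩ := Submodule.mem_sup.1 (Submodule.mem_comap.1 hx)
      refine ⟨⟨v, hLF (Submodule.mem_sup_right hv)⟩, hv, (Submodule.Quotient.eq _).2 ?_⟩
      change v - x.1 ∈ E
      have : v - x.1 = -u := by
        have h : u + v = x.1 := huv
        rw [← h]; abel
      rw [this]
      exact E.neg_mem hu

theorem generic_projectivity_graded_subquotient
    (A : Type) [CommRing A] [IsNoetherianRing A] [IsReduced A]
    (G : Type) [AddCommGroup G] [DecidableEq G]
    (r : ℕ) (w : Fin r → G) (ψ : G →+ ℤ) (hψ : ∀ i, 0 < ψ (w i))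
    -- `B ⊇ R`, a finitely generated `G`-graded `R`-algebra:
    (B : Type) [CommRing B] [Algebra A B]
    [Algebra (MvPolynomial (Fin r) A) B]
    [IsScalarTower A (MvPolynomial (Fin r) A) B]
    [Algebra.FiniteType (MvPolynomial (Fin r) A) B]
    (hRB : Function.Injective (algebraMap (MvPolynomial (Fin r) A) B))
    (ℬ : G → Submodule A B) [GradedAlgebra ℬ]
    (halg : ∀ (g : G) (x : MvPolynomial (Fin r) A),
      x ∈ weightedHomogeneousSubmodule A w g →
        algebraMap (MvPolynomial (Fin r) A) B x ∈ ℬ g)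
    -- `M`, a finitely generated `G`-graded `B`-module:
    (M : Type) [AddCommGroup M] [Module B M] [Module A M] [IsScalarTower A B M]
    [Module (MvPolynomial (Fin r) A) M]
    [IsScalarTower (MvPolynomial (Fin r) A) B M]
    [IsScalarTower A (MvPolynomial (Fin r) A) M]
    [Module.Finite B M]
    (ℳ : G → Submodule A M) [DirectSum.Decomposition ℳ]
    [SetLike.GradedSMul ℬ ℳ]
    -- `E`, a finitely generated graded `R`-submodule of `M`:
    (E : Submodule (MvPolynomial (Fin r) A) M) (hEfg : E.FG)
    (hEgr : ∀ (g : G) (m : M), m ∈ E → (DirectSum.decompose ℳ m g : M) ∈ E)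
    -- `H`, a finitely generated graded `A`-submodule of `M`:
    (H : Submodule A M) (hHfg : H.FG)
    (hHgr : ∀ (g : G) (m : M), m ∈ H → (DirectSum.decompose ℳ m g : M) ∈ H) :
    -- conclusion about `𝔐 = M / (E + H)`:
    ∃ a : A, (∀ p ∈ minimalPrimes A, a ∉ p) ∧
      Module.Projective (Localization.Away a)
        (LocalizedModule (Submonoid.powers a)
          (M ⧸ (Submodule.restrictScalars A E ⊔ H))) := by
  obtain ⟨a, ha, hP⟩ := genProj_quotient_sup (B := B) E hEfg H hHfg
  exact ⟨a, ha, (projAt_iff a _).1 hP⟩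
end

section
/- Assume A is a Noetherian integral domain. Let B ⊇ R be a finitely generated G-graded R-algebra, M a finitely generated G-graded B-module, E a finitely generated G-graded R-submodule of M, and H a finitely generated G-graded A-submodule of M (i.e., [H]_ν ⊆ [M]_ν for all ν ∈ G). Set 𝔐 = M/(E + H). Then there exists an element 0 ≠ a ∈ A such that every graded component [𝔐_a]_ν, ν ∈ G, of 𝔐_a = 𝔐 ⊗_A A_a is a free A_a-module. -/
/-!
The quotient `M / (E + H)` is exhausted by a filtration with finitely many successive quotients up
to a shift of the degree, as in the Hochster–Roberts proof of generic freeness; the filtration is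
kept graded, so that it can be read off in each degree separately.

Freeness after inverting `a ≠ 0` is handled through `FreeAt a P Q`: there is a family in `Q`,
linearly independent modulo `P`, whose span together with `P` contains a power-of-`a` multiple of
every element of `Q`. Such a family becomes a basis after localization
(`FreeAt.free_localizedModule`), and families for the layers of a filtration combine to a family
for the union (`FreeAt.chain`). `GenericFree ℳ P Q` says that one `a ≠ 0` works for `P` and
`Q ∩ ℳ ν` in all degrees `ν` at once.

Apart from `E + H`, all modules in the argument are graded submodules of `M` stable under a finite
set `s` of homogeneous elements of `B`, that is, modules over the algebra `A[s]`. The induction adds one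
homogeneous element `x` of degree `d` to `s` at a time (`FreeOver.step`). For `U = A[s]·F` and
`K` stable under `s` and `x`, the module `K + A[s, x]·F` is the union of
`D n = K + U + x U + … + x ^ (n - 1) U`, and multiplication by `x ^ n` identifies `U / W n`, up to
a shift by `n • d`, with `D (n + 1) / D n`, where `W n` is an increasing sequence of submodules of
the Noetherian module `U`. So only finitely many quotients `U / W n` occur, each of them a finitely
generated graded `A[s]`-module, and the product of their denominators serves every layer in every
degree. The start `s = ∅` is a finitely generated graded module over the domain `A`, where one
adds a homogeneous generator at a time (`GenericFree.span`).

This gives generic freeness of `P + A[s]·F` modulo an `A[s]`-submodule `P` (`stableFree`), which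
controls the layers `U / W n`. For `E + H` the same step is run first inside the modules
`E + A[s]·F`, with `s` growing from `∅` to generators of `R`; then `E`, being finitely generated
over `R`, is absorbed into `A[s]·F`, and `s` grows further to generators of `B`.
-/
namespace GenFree
set_option linter.unusedSectionVars false

/-! ### Freeness after inverting one element -/

section Modules
variable {A : Type} [CommRing A] {M : Type} [AddCommGroup M] [Module A M]

/-- `Q`, taken modulo `P`, becomes free after inverting `a`: some family in `Q` is linearly
independent modulo `P`, and modulo `P` every element of `Q` has a multiple by a power of `a` in the
span of the family. It is not required that `P ≤ Q`, so the module in question is `Q / (P ∩ Q)`;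
it may have torsion killed by powers of `a`. -/
def FreeAt (a : A) (P Q : Submodule A M) : Prop :=
  ∃ (ι : Type) (v : ι → M), (∀ i, v i ∈ Q) ∧ LinearIndependent A (fun i => P.mkQ (v i)) ∧
    ∀ m ∈ Q, ∃ k : ℕ, a ^ k • m ∈ P ⊔ Submodule.span A (Set.range v)

lemma linearIndependent_mkQ_iff {ι : Type} (v : ι → M) (P : Submodule A M) :
    LinearIndependent A (fun i => P.mkQ (v i)) ↔
      ∀ l : ι →₀ A, Finsupp.linearCombination A v l ∈ P → l = 0 := by
  rw [linearIndependent_iff]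
  refine forall_congr' fun l => ?_
  have : Finsupp.linearCombination A (fun i => P.mkQ (v i)) l
      = P.mkQ (Finsupp.linearCombination A v l) := by
    rw [Finsupp.apply_linearCombination]; rfl
  rw [this, Submodule.mkQ_apply, Submodule.Quotient.mk_eq_zero]

lemma FreeAt.of_dvd {a b : A} (hab : a ∣ b) {P Q : Submodule A M} (h : FreeAt a P Q) :
    FreeAt b P Q := by
  obtain ⟨ι, v, hv, hli, hs⟩ := h
  refine ⟨ι, v, hv, hli, fun m hm => ?_⟩
  obtain ⟨k, hk⟩ := hs m hm
  obtain ⟨c, rfl⟩ := hab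
  refine ⟨k, ?_⟩
  rw [mul_pow, mul_comm, mul_smul]
  exact Submodule.smul_mem _ _ hk

/-- Freeness of all layers of a filtration, cut down to `L`, gives freeness of the union: the
families for the layers are put together. -/
lemma FreeAt.chain {a : A} {N : ℕ → Submodule A M} (hN : Monotone N) (L : Submodule A M)
    (h : ∀ n, FreeAt a (N n) (N (n + 1) ⊓ L)) : FreeAt a (N 0) ((⨆ n, N n) ⊓ L) := by
  choose ι v hv hli hs using h
  refine ⟨Σ n, ι n, fun p => v p.1 p.2, fun p => ⟨Submodule.mem_iSup_of_mem _ (hv p.1 p.2).1,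
    (hv p.1 p.2).2⟩, ?_, ?_⟩
  · rw [linearIndependent_mkQ_iff]
    intro l hl
    by_contra hl0
    have hne : l.splitSupport.Nonempty := by
      obtain ⟨p, hp⟩ := Finsupp.ne_iff.1 hl0
      refine ⟨p.1, (Finsupp.mem_splitSupport_iff_nonzero _ _).2 fun h0 => hp ?_⟩
      have := DFunLike.congr_fun h0 p.2
      simpa [Finsupp.split_apply] using this
    -- The last layer in which `l` is nonzero gives a relation modulo the previous layers.
    set n := l.splitSupport.max' hne with hn
    have hsum : Finsupp.linearCombination A (fun p : Σ n, ι n => v p.1 p.2) l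
        = ∑ i ∈ l.splitSupport, Finsupp.linearCombination A (v i) (l.split i) := by
      rw [Finsupp.linearCombination_apply, Finsupp.sigma_sum]
      rfl
    rw [hsum, ← Finset.add_sum_erase _ _ (Finset.max'_mem _ hne)] at hl
    have hrest : ∑ i ∈ l.splitSupport.erase n, Finsupp.linearCombination A (v i) (l.split i)
        ∈ N n := by
      refine Submodule.sum_mem _ fun i hi => ?_
      have hlt : i < n := lt_of_le_of_ne (Finset.le_max' _ _ (Finset.mem_of_mem_erase hi))
        (Finset.ne_of_mem_erase hi)
      rw [Finsupp.linearCombination_apply]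
      exact Submodule.sum_mem _ fun j _ => Submodule.smul_mem _ _ (hN hlt (hv i j).1)
    have h1 := (Submodule.add_mem_iff_left _ hrest).1 (hN (Nat.zero_le n) hl)
    exact (Finsupp.mem_splitSupport_iff_nonzero _ _).1 (Finset.max'_mem _ hne)
      ((linearIndependent_mkQ_iff _ _).1 (hli n) _ h1)
  · set V := Submodule.span A (Set.range fun p : Σ n, ι n => v p.1 p.2) with hV
    have key : ∀ n, ∀ m ∈ N n ⊓ L, ∃ k : ℕ, a ^ k • m ∈ N 0 ⊔ V := by
      intro n
      induction n with
      | zero => exact fun m hm => ⟨0, by simpa using Submodule.mem_sup_left hm.1⟩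
      | succ n ih =>
        intro m hm
        obtain ⟨k, hk⟩ := hs n m hm
        obtain ⟨p, hp, q, hq, hpq⟩ := Submodule.mem_sup.1 hk
        have hqL : q ∈ L := (Submodule.span_le.2 (by rintro _ ⟨i, rfl⟩; exact (hv n i).2)) hq
        have hqV : q ∈ V := (Submodule.span_mono (by rintro _ ⟨i, rfl⟩; exact ⟨⟨n, i⟩, rfl⟩)) hq
        have hpL : p ∈ L := by
          rw [eq_sub_of_add_eq hpq]; exact sub_mem (Submodule.smul_mem _ _ hm.2) hqL
        obtain ⟨j, hj⟩ := ih p ⟨hp, hpL⟩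
        refine ⟨j + k, ?_⟩
        rw [pow_add, mul_smul, ← hpq, smul_add]
        exact add_mem hj (Submodule.smul_mem _ _ (Submodule.mem_sup_right hqV))
    rintro m ⟨hm, hmL⟩
    obtain ⟨n, hn⟩ := (Submodule.mem_iSup_of_directed _ hN.directed_le).1 hm
    exact key n m ⟨hn, hmL⟩

lemma FreeAt.of_le {a : A} {P Q : Submodule A M} (h : ∀ m ∈ Q, ∃ k : ℕ, a ^ k • m ∈ P) :
    FreeAt a P Q :=
  ⟨Empty, Empty.elim, fun i => i.elim, linearIndependent_empty_type, fun m hm =>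
    (h m hm).imp fun _ hk => Submodule.mem_sup_left hk⟩

lemma FreeAt.trans {a : A} {P P' Q L : Submodule A M} (h1 : P ≤ P') (h2 : P' ≤ Q)
    (hP : FreeAt a P (P' ⊓ L)) (hQ : FreeAt a P' (Q ⊓ L)) : FreeAt a P (Q ⊓ L) := by
  let N : ℕ → Submodule A M
    | 0 => P
    | 1 => P'
    | _ + 2 => Q
  have hN : Monotone N := monotone_nat_of_le_succ (by rintro (_ | _ | n) <;> simp [N, h1, h2])
  have hsup : ⨆ n, N n = Q := by
    refine le_antisymm (iSup_le ?_) (le_iSup N 2)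
    rintro (_ | _ | n)
    exacts [h1.trans h2, h2, le_rfl]
  have := FreeAt.chain (a := a) hN L (by
    rintro (_ | _ | n)
    · exact hP
    · exact hQ
    · exact FreeAt.of_le fun m hm => ⟨0, by simpa using hm.1⟩)
  rwa [hsup] at this

/-- Transport of freeness along a linear map `X` inducing an isomorphism from `U ∩ L` modulo `W`
to `D' ∩ L'` modulo `D`. -/
lemma FreeAt.map {a : A} {W U L D D' L' : Submodule A M} (X : M →ₗ[A] M)
    (hX : ∀ m ∈ U ⊓ L, X m ∈ D' ⊓ L') (hWD : ∀ m ∈ W, X m ∈ D)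
    (hDW : ∀ m ∈ U, X m ∈ D → m ∈ W) (hsurj : ∀ m ∈ D' ⊓ L', ∃ u ∈ U ⊓ L, m - X u ∈ D)
    (h : FreeAt a W (U ⊓ L)) : FreeAt a D (D' ⊓ L') := by
  obtain ⟨ι, v, hv, hli, hs⟩ := h
  refine ⟨ι, fun i => X (v i), fun i => hX _ (hv i), ?_, fun m hm => ?_⟩
  · rw [linearIndependent_mkQ_iff] at hli ⊢
    intro l hl
    have : Finsupp.linearCombination A (fun i => X (v i)) l
        = X (Finsupp.linearCombination A v l) := by
      rw [Finsupp.apply_linearCombination]; rfl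
    rw [this] at hl
    refine hli l (hDW _ ?_ hl)
    rw [Finsupp.linearCombination_apply]
    exact Submodule.sum_mem _ fun j _ => Submodule.smul_mem _ _ (hv j).1
  · obtain ⟨u, hu, hmu⟩ := hsurj m hm
    obtain ⟨k, hk⟩ := hs u hu
    refine ⟨k, ?_⟩
    have h1 : X (a ^ k • u) ∈ D ⊔ Submodule.span A (Set.range fun i => X (v i)) := by
      have h2 := Submodule.mem_map_of_mem (f := X) hk
      rw [Submodule.map_sup, Submodule.map_span, ← Set.range_comp] at h2
      exact sup_le_sup_right (Submodule.map_le_iff_le_comap.2 hWD) _ h2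
    have : a ^ k • m = a ^ k • (m - X u) + X (a ^ k • u) := by
      rw [map_smul, smul_sub, sub_add_cancel]
    rw [this]
    exact add_mem (Submodule.mem_sup_left (Submodule.smul_mem _ _ hmu)) h1

lemma free_localizedModule_of_family {a : A} {N : Type} [AddCommGroup N] [Module A N] {ι : Type}
    {b : ι → N} (hb : LinearIndependent A b)
    (hs : ∀ n, ∃ k : ℕ, a ^ k • n ∈ Submodule.span A (Set.range b)) :
    Module.Free (Localization.Away a) (LocalizedModule (Submonoid.powers a) N) := by
  let f := LocalizedModule.mkLinearMap (Submonoid.powers a) N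
  have hfb := LinearIndependent.of_isLocalizedModule (Localization.Away a)
    (Submonoid.powers a) f hb
  refine Module.Free.of_basis (Module.Basis.mk hfb ?_)
  rintro z -
  induction z using LocalizedModule.induction_on with | _ n s
  obtain ⟨k, hk⟩ := hs n
  obtain ⟨t, ht⟩ : ∃ t : Submonoid.powers a, (t : A) = a ^ k :=
    ⟨⟨a ^ k, pow_mem (Submonoid.mem_powers a) k⟩, rfl⟩
  have hz : LocalizedModule.mk n s = Localization.mk (1 : A) (s * t) • f (a ^ k • n) := by
    rw [LocalizedModule.mkLinearMap_apply, LocalizedModule.mk_smul_mk, one_smul, mul_one, ← ht]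
    exact (LocalizedModule.mk_cancel_common_right s t n).symm
  rw [hz]
  refine Submodule.smul_mem _ _ ?_
  have h4 := Submodule.mem_map_of_mem (f := f) hk
  rw [Submodule.map_span, ← Set.range_comp] at h4
  exact Submodule.span_le_restrictScalars A _ _ h4

lemma FreeAt.free_localizedModule {a : A} {P L : Submodule A M} (h : FreeAt a P L) :
    Module.Free (Localization.Away a)
      (LocalizedModule (Submonoid.powers a) ↥(Submodule.map P.mkQ L)) := by
  obtain ⟨ι, v, hv, hli, hs⟩ := h
  let N := Submodule.map P.mkQ L
  let b : ι → N := fun i => ⟨P.mkQ (v i), Submodule.mem_map_of_mem (hv i)⟩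
  have hb : LinearIndependent A b := LinearIndependent.of_comp N.subtype hli
  refine free_localizedModule_of_family hb fun n => ?_
  obtain ⟨m, hm, hmn⟩ := n.2
  obtain ⟨k, hk⟩ := hs m hm
  refine ⟨k, ?_⟩
  have h2 := Submodule.mem_map_of_mem (f := P.mkQ) hk
  rw [Submodule.map_sup, Submodule.map_span, ← Set.range_comp, P.mkQ_map_self, bot_sup_eq,
    map_smul, hmn] at h2
  have h3 : Set.range (P.mkQ ∘ v) = N.subtype '' Set.range b := by
    rw [← Set.range_comp]; rfl
  rw [h3, ← Submodule.map_span] at h2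
  obtain ⟨n', hn', hnn⟩ := h2
  rwa [← Subtype.ext (a2 := a ^ k • n) hnn]

end Modules

/-! ### Graded submodules and the case of `A`-modules -/

section Graded
variable {A : Type} [CommRing A] {M : Type} [AddCommGroup M] [Module A M]
  {G : Type} [AddCommGroup G] [DecidableEq G]
  (ℳ : G → Submodule A M) [DirectSum.Decomposition ℳ]

/-- The projection of `M` onto its component of degree `g`, as an endomorphism of `M`. -/
def proj (g : G) : M →ₗ[A] M :=
  (ℳ g).subtype ∘ₗ DirectSum.component A G _ g ∘ₗ (DirectSum.decomposeLinearEquiv ℳ).toLinearMap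

lemma proj_mem (g : G) (m : M) : proj ℳ g m ∈ ℳ g := (DirectSum.decompose ℳ m g).2

lemma proj_of_mem {g : G} {m : M} (hm : m ∈ ℳ g) : proj ℳ g m = m :=
  DirectSum.decompose_of_mem_same ℳ hm

lemma proj_of_mem_ne {g h : G} {m : M} (hm : m ∈ ℳ g) (hgh : g ≠ h) : proj ℳ h m = 0 :=
  DirectSum.decompose_of_mem_ne ℳ hm hgh

/-- A submodule is graded when it contains the components of its elements. -/
def IsGraded (P : Submodule A M) : Prop := ∀ g, ∀ m ∈ P, proj ℳ g m ∈ P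

variable {ℳ}

lemma IsGraded.sup {P Q : Submodule A M} (hP : IsGraded ℳ P) (hQ : IsGraded ℳ Q) :
    IsGraded ℳ (P ⊔ Q) := by
  intro g m hm
  obtain ⟨p, hp, q, hq, rfl⟩ := Submodule.mem_sup.1 hm
  rw [map_add]
  exact Submodule.add_mem_sup (hP g p hp) (hQ g q hq)

variable (ℳ)

/-- All elements of `F` are homogeneous. -/
def Homog (F : Set M) : Prop := ∀ m ∈ F, ∃ g, m ∈ ℳ g

variable {ℳ}

lemma proj_mem_of_homog {F : Set M} (hF : Homog ℳ F) {N : Submodule A M} (hFN : F ⊆ N)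
    (g : G) {m : M} (hm : m ∈ F) : proj ℳ g m ∈ N := by
  obtain ⟨h, hh⟩ := hF m hm
  by_cases hgh : h = g
  · subst hgh
    rw [proj_of_mem ℳ hh]
    exact hFN hm
  · rw [proj_of_mem_ne ℳ hh hgh]
    exact zero_mem _

lemma isGraded_span {F : Set M} (hF : Homog ℳ F) : IsGraded ℳ (Submodule.span A F) := by
  intro g
  have : Submodule.span A F ≤ (Submodule.span A F).comap (proj ℳ g) :=
    Submodule.span_le.2 fun m hm => proj_mem_of_homog hF Submodule.subset_span g hm
  exact this

/-- The homogeneous components of the elements of a finite set `T` form a finite set whose span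
contains `T` and which lies in every graded submodule containing `T`. -/
lemma exists_homog {T : Set M} (hT : T.Finite) : ∃ T' : Set M, T'.Finite ∧ Homog ℳ T' ∧
    T ⊆ Submodule.span A T' ∧ ∀ N : Submodule A M, IsGraded ℳ N → T ⊆ N → T' ⊆ N := by
  classical
  refine ⟨⋃ t ∈ T, (fun g => proj ℳ g t) '' ((DirectSum.decompose ℳ t).support : Set G),
    hT.biUnion fun t _ => (Finset.finite_toSet _).image _, ?_, ?_, ?_⟩
  · intro m hm
    simp only [Set.mem_iUnion] at hm
    obtain ⟨t, _, g, _, rfl⟩ := hm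
    exact ⟨g, proj_mem ℳ g t⟩
  · intro t ht
    rw [← DirectSum.sum_support_decompose ℳ t]
    refine Submodule.sum_mem _ fun g hg => Submodule.subset_span ?_
    simp only [Set.mem_iUnion]
    exact ⟨t, ht, g, hg, rfl⟩
  · intro N hN hTN m hm
    simp only [Set.mem_iUnion] at hm
    obtain ⟨t, ht, g, _, rfl⟩ := hm
    exact hN g t (hTN ht)

variable (ℳ)

/-- One nonzero `a` makes `Q` modulo `P` free in every degree. -/
def GenericFree (P Q : Submodule A M) : Prop := ∃ a : A, a ≠ 0 ∧ ∀ ν, FreeAt a P (Q ⊓ ℳ ν)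

variable {ℳ}

lemma GenericFree.trans [IsDomain A] {P P' Q : Submodule A M} (h1 : P ≤ P') (h2 : P' ≤ Q)
    (hP : GenericFree ℳ P P') (hQ : GenericFree ℳ P' Q) : GenericFree ℳ P Q := by
  obtain ⟨a, ha, hP⟩ := hP
  obtain ⟨b, hb, hQ⟩ := hQ
  exact ⟨a * b, mul_ne_zero ha hb, fun ν => FreeAt.trans h1 h2
    ((hP ν).of_dvd (dvd_mul_right a b)) ((hQ ν).of_dvd (dvd_mul_left b a))⟩

/-- If a nonzero multiple of `f` lies in `P`, inverting the multiplier kills the quotient;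
otherwise the quotient is free on `f` in degree `d` and zero in the other degrees. -/
lemma GenericFree.span_singleton [IsDomain A] {P : Submodule A M} (hP : IsGraded ℳ P) {f : M} {d : G}
    (hf : f ∈ ℳ d) : GenericFree ℳ P (P ⊔ Submodule.span A {f}) := by
  by_cases htor : ∃ a : A, a ≠ 0 ∧ a • f ∈ P
  · obtain ⟨a, ha, haf⟩ := htor
    refine ⟨a, ha, fun ν => FreeAt.of_le ?_⟩
    rintro m ⟨hm, -⟩
    obtain ⟨p, hp, q, hq, rfl⟩ := Submodule.mem_sup.1 hm
    obtain ⟨c, rfl⟩ := Submodule.mem_span_singleton.1 hq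
    refine ⟨1, ?_⟩
    rw [pow_one, smul_add, smul_comm]
    exact add_mem (P.smul_mem _ hp) (P.smul_mem _ haf)
  · push Not at htor
    refine ⟨1, one_ne_zero, fun ν => ?_⟩
    by_cases hν : d = ν
    · subst hν
      refine ⟨Unit, fun _ => f, fun _ => ⟨Submodule.mem_sup_right
        (Submodule.mem_span_singleton_self f), hf⟩, ?_, fun m hm => ⟨0, ?_⟩⟩
      · rw [linearIndependent_mkQ_iff]
        intro l hl
        ext
        by_contra h0
        refine htor (l ()) h0 ?_
        simpa [Finsupp.linearCombination_unique] using hl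
      · rw [pow_zero, one_smul, Set.range_const]
        exact hm.1
    · refine FreeAt.of_le ?_
      rintro m ⟨hm, hmν⟩
      obtain ⟨p, hp, q, hq, rfl⟩ := Submodule.mem_sup.1 hm
      obtain ⟨c, rfl⟩ := Submodule.mem_span_singleton.1 hq
      refine ⟨0, ?_⟩
      rw [pow_zero, one_smul, ← proj_of_mem ℳ hmν, map_add, map_smul, proj_of_mem_ne ℳ hf hν,
        smul_zero, add_zero]
      exact hP ν p hp

lemma GenericFree.span [IsDomain A] {P : Submodule A M} (hP : IsGraded ℳ P) {F : Set M} (hF : F.Finite)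
    (hFh : Homog ℳ F) : GenericFree ℳ P (P ⊔ Submodule.span A F) := by
  induction F, hF using Set.Finite.induction_on with
  | empty =>
    refine ⟨1, one_ne_zero, fun ν => FreeAt.of_le fun m hm => ⟨0, by simpa using hm.1⟩⟩
  | @insert f F _ _ ih =>
    have hF0 : Homog ℳ F := fun m hm => hFh m (Set.mem_insert_of_mem _ hm)
    obtain ⟨d, hd⟩ := hFh f (Set.mem_insert _ _)
    have heq : P ⊔ Submodule.span A (insert f F)
        = (P ⊔ Submodule.span A F) ⊔ Submodule.span A {f} := by
      rw [Submodule.span_insert, sup_comm (Submodule.span A {f}), sup_assoc]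
    rw [heq]
    exact GenericFree.trans le_sup_left le_sup_left (ih hF0)
      (GenericFree.span_singleton (hP.sup (isGraded_span hF0)) hd)

end Graded

/-! ### Modules over the subalgebra generated by a set of elements of `B` -/

section Span
variable {A : Type} [CommRing A] {B : Type} [CommRing B] [Algebra A B]
  {M : Type} [AddCommGroup M] [Module A M] [Module B M] [IsScalarTower A B M]

/-- `N` is stable under multiplication by the elements of `s`. -/
def Stable (s : Set B) (N : Submodule A M) : Prop := ∀ b ∈ s, ∀ m ∈ N, b • m ∈ N

lemma Stable.mono {s t : Set B} (hst : s ⊆ t) {N : Submodule A M} (h : Stable t N) : Stable s N :=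
  fun b hb => h b (hst hb)

lemma Stable.adjoin {s : Set B} {N : Submodule A M} (h : Stable s N) :
    Stable (Algebra.adjoin A s : Set B) N := by
  intro b hb
  induction hb using Algebra.adjoin_induction with
  | mem b hb => exact h b hb
  | algebraMap r => intro m hm; rw [algebraMap_smul]; exact N.smul_mem r hm
  | add b c _ _ hb hc => intro m hm; rw [add_smul]; exact add_mem (hb m hm) (hc m hm)
  | mul b c _ _ hb hc => intro m hm; rw [mul_smul]; exact hb _ (hc m hm)

/-- An `A`-submodule stable under `s`, viewed as a submodule over `A[s]`. -/
def Stable.toSubmodule {s : Set B} {N : Submodule A M} (h : Stable s N) :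
    Submodule (Algebra.adjoin A s) M where
  carrier := N
  add_mem' := N.add_mem
  zero_mem' := N.zero_mem
  smul_mem' b m hm := h.adjoin b.1 b.2 m hm

lemma Stable.sup {s : Set B} {N N' : Submodule A M} (h : Stable s N) (h' : Stable s N') :
    Stable s (N ⊔ N') := by
  intro b hb m hm
  obtain ⟨p, hp, q, hq, rfl⟩ := Submodule.mem_sup.1 hm
  rw [smul_add]
  exact Submodule.add_mem_sup (h b hb p hp) (h' b hb q hq)

variable (A)

/-- The `A[s]`-submodule `A[s]·F` generated by `F`, viewed as an `A`-submodule. -/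
def gspan (s : Set B) (F : Set M) : Submodule A M :=
  (Submodule.span (Algebra.adjoin A s) F).restrictScalars A

lemma subset_gspan (s : Set B) (F : Set M) : F ⊆ gspan A s F := Submodule.subset_span

lemma stable_gspan (s : Set B) (F : Set M) : Stable s (gspan A s F) := fun b hb _ hm =>
  Submodule.smul_mem (Submodule.span (Algebra.adjoin A s) F) ⟨b, Algebra.subset_adjoin hb⟩ hm

variable {A}

lemma gspan_le {s : Set B} {F : Set M} {N : Submodule A M} (h : Stable s N) (hF : F ⊆ N) :
    gspan A s F ≤ N := by
  have : Submodule.span (Algebra.adjoin A s) F ≤ h.toSubmodule := Submodule.span_le.2 hF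
  exact this

lemma gspan_mono_right (s : Set B) {F F' : Set M} (h : F ⊆ F') : gspan A s F ≤ gspan A s F' :=
  gspan_le (stable_gspan A s F') (h.trans (subset_gspan A s F'))

lemma gspan_mono_left {s t : Set B} (h : s ⊆ t) (F : Set M) : gspan A s F ≤ gspan A t F :=
  gspan_le ((stable_gspan A t F).mono h) (subset_gspan A t F)

lemma gspan_empty (F : Set M) : gspan A (∅ : Set B) F = Submodule.span A F :=
  le_antisymm (gspan_le (fun _ hb => absurd hb (Set.notMem_empty _)) Submodule.subset_span)
    (Submodule.span_le.2 (subset_gspan A _ F))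

/-- Since `A[s]` is Noetherian for finite `s`, so is `A[s]·F` for finite `F`. -/
lemma gspan_stabilizes [IsNoetherianRing A] {s : Set B} (hs : s.Finite) {F : Set M}
    (hF : F.Finite) {W : ℕ → Submodule A M} (hW : Monotone W) (hWs : ∀ n, Stable s (W n))
    (hWF : ∀ n, W n ≤ gspan A s F) : ∃ n₀, ∀ n, n₀ ≤ n → W n₀ = W n := by
  have : IsNoetherianRing (Algebra.adjoin A s) :=
    isNoetherianRing_of_fg (Subalgebra.fg_def.2 ⟨s, hs, rfl⟩)
  let U := Submodule.span (Algebra.adjoin A s) F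
  have : IsNoetherian (Algebra.adjoin A s) U := isNoetherian_span_of_finite _ hF
  obtain ⟨n₀, hn₀⟩ := monotone_stabilizes_iff_noetherian.2 this
    ⟨fun n => (hWs n).toSubmodule.comap U.subtype, fun i j hij m hm => hW hij hm⟩
  refine ⟨n₀, fun n hn => le_antisymm (hW hn) fun m hm => ?_⟩
  have h1 := SetLike.ext_iff.1 (hn₀ n hn) ⟨m, hWF n hm⟩
  exact h1.2 hm

end Span

/-! ### Adding one homogeneous element at a time -/

section Main
variable {A : Type} [CommRing A] {B : Type} [CommRing B] [Algebra A B]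
  {M : Type} [AddCommGroup M] [Module A M] [Module B M] [IsScalarTower A B M]
  {G : Type} [AddCommGroup G] [DecidableEq G]
  (ℳ : G → Submodule A M) [DirectSum.Decomposition ℳ]

/-- Multiplication by `b` raises degrees in `M` by `d`. -/
def HasDegree (b : B) (d : G) : Prop := ∀ ν, ∀ m ∈ ℳ ν, b • m ∈ ℳ (d + ν)

variable {ℳ}

lemma HasDegree.pow {b : B} {d : G} (h : HasDegree ℳ b d) (n : ℕ) :
    HasDegree ℳ (b ^ n) (n • d) := by
  induction n with
  | zero => intro ν m hm; simpa using hm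
  | succ n ih =>
    intro ν m hm
    rw [pow_succ', mul_smul, succ_nsmul', add_assoc]
    exact h _ _ (ih _ _ hm)

lemma HasDegree.proj_smul {b : B} {d : G} (h : HasDegree ℳ b d) (ν : G) (m : M) :
    proj ℳ (d + ν) (b • m) = b • proj ℳ ν m := by
  induction m using DirectSum.Decomposition.inductionOn ℳ with
  | zero => simp
  | @homogeneous i m =>
    by_cases hi : i = ν
    · subst hi
      rw [proj_of_mem ℳ m.2, proj_of_mem ℳ (h _ _ m.2)]
    · rw [proj_of_mem_ne ℳ m.2 hi, smul_zero, proj_of_mem_ne ℳ (h _ _ m.2) (by simpa using hi)]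
  | add m m' hm hm' => rw [smul_add, map_add, map_add, smul_add, hm, hm']

lemma HasDegree.proj_smul' {b : B} {d : G} (h : HasDegree ℳ b d) (ν : G) (m : M) :
    proj ℳ ν (b • m) = b • proj ℳ (ν - d) m := by
  rw [← h.proj_smul, add_sub_cancel]

variable (ℳ)

/-- Every element of `s` acts homogeneously on `M`. -/
def HomogAct (s : Set B) : Prop := ∀ b ∈ s, ∃ d, HasDegree ℳ b d

variable {ℳ}

lemma HomogAct.mono {s t : Set B} (hst : s ⊆ t) (h : HomogAct ℳ t) : HomogAct ℳ s :=
  fun b hb => h b (hst hb)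

lemma isGraded_gspan {s : Set B} (hs : HomogAct ℳ s) {F : Set M} (hF : Homog ℳ F) :
    IsGraded ℳ (gspan A s F) := by
  have hle : gspan A s F ≤ ⨅ g, (gspan A s F).comap (proj ℳ g) := by
    refine gspan_le (fun b hb m hm => ?_) fun m hm => ?_
    · simp only [Submodule.mem_iInf, Submodule.mem_comap] at hm ⊢
      obtain ⟨d, hd⟩ := hs b hb
      intro g
      rw [hd.proj_smul']
      exact stable_gspan A s F b hb _ (hm _)
    · simp only [SetLike.mem_coe, Submodule.mem_iInf, Submodule.mem_comap]
      exact fun g => proj_mem_of_homog hF (subset_gspan A s F) g hm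
  intro g m hm
  have := hle hm
  simp only [Submodule.mem_iInf, Submodule.mem_comap] at this
  exact this g

variable (ℳ)

/-- `K + A[s]·F` is generically free modulo `P` for every finite set `F` of homogeneous elements
containing `T`. The first clause ensures that `P` lies in all these modules. -/
def FreeOver (s : Set B) (P K : Submodule A M) (T : Set M) : Prop :=
  P ≤ K ⊔ gspan A s T ∧
    ∀ F : Set M, F.Finite → Homog ℳ F → T ⊆ F → GenericFree ℳ P (K ⊔ gspan A s F)

/-- Generic freeness for finitely generated graded `A[s]`-modules, realized as quotients of
`P + A[s]·F` by a graded submodule `P` stable under `s`. -/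
def StableFree (s : Set B) : Prop :=
  ∀ P : Submodule A M, IsGraded ℳ P → Stable s P → FreeOver ℳ s P P ∅

variable {ℳ}

/-- The inductive step from `A[s]` to `A[s, x]`: `K + A[s, x]·F` is filtered by the layers
`K + U + x U + … + x ^ n U` with `U = A[s]·F`, and up to shifts of the degree only finitely many
successive quotients occur. -/
lemma FreeOver.step [IsDomain A] [IsNoetherianRing A] {s : Set B} (hsf : s.Finite)
    (hs : HomogAct ℳ s) {x : B} {d : G} (hx : HasDegree ℳ x d) (hmain : StableFree ℳ s)
    {P K : Submodule A M} {T : Set M} (hK : IsGraded ℳ K) (hKs : Stable (insert x s) K)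
    (h : FreeOver ℳ s P K T) : FreeOver ℳ (insert x s) P K T := by
  refine ⟨h.1.trans (sup_le_sup_left (gspan_mono_left (Set.subset_insert _ _) _) _), ?_⟩
  intro F hF hFh hTF
  have hKx : ∀ m ∈ K, x • m ∈ K := hKs x (Set.mem_insert _ _)
  have hKs' : Stable s K := hKs.mono (Set.subset_insert _ _)
  set U := gspan A s F with hU
  have hUs : Stable s U := stable_gspan A s F
  have hUg : IsGraded ℳ U := isGraded_gspan hs hFh
  obtain ⟨X, hX⟩ : ∃ X : ℕ → M →ₗ[A] M, ∀ n m, X n m = x ^ n • m :=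
    ⟨fun n => Algebra.lsmul A A M (x ^ n), fun _ _ => rfl⟩
  -- `D n = K + U + x U + … + x ^ (n - 1) U`, so that `D (n + 1) / D n` is a quotient of `U`.
  obtain ⟨D, hD0, hDsucc⟩ : ∃ D : ℕ → Submodule A M, D 0 = K ∧
      ∀ n, D (n + 1) = D n ⊔ U.map (X n) :=
    ⟨fun n => Nat.rec K (fun n D => D ⊔ U.map (X n)) n, rfl, fun _ => rfl⟩
  have hDmono : Monotone D := monotone_nat_of_le_succ fun n => (hDsucc n) ▸ le_sup_left
  have hXU : ∀ n, ∀ u ∈ U, x ^ n • u ∈ D (n + 1) := fun n u hu =>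
    (hDsucc n) ▸ Submodule.mem_sup_right (hX n u ▸ Submodule.mem_map_of_mem hu)
  have hDs : ∀ n, Stable s (D n) := by
    intro n
    induction n with
    | zero => rwa [hD0]
    | succ n ih =>
      rw [hDsucc]
      refine ih.sup ?_
      rintro b hb _ ⟨u, hu, rfl⟩
      refine ⟨b • u, hUs b hb u hu, ?_⟩
      rw [hX, hX, smul_comm]
  have hDg : ∀ n, IsGraded ℳ (D n) := by
    intro n
    induction n with
    | zero => rwa [hD0]
    | succ n ih =>
      rw [hDsucc]
      refine ih.sup ?_
      rintro g _ ⟨u, hu, rfl⟩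
      refine ⟨_, hUg (g - n • d) u hu, ?_⟩
      rw [hX, hX, (hx.pow n).proj_smul']
  have hDx : ∀ n, ∀ m ∈ D n, x • m ∈ D (n + 1) := by
    intro n
    induction n with
    | zero => exact fun m hm => hDmono (Nat.zero_le 1) (by rw [hD0] at hm ⊢; exact hKx m hm)
    | succ n ih =>
      intro m hm
      rw [hDsucc] at hm
      obtain ⟨p, hp, _, ⟨u, hu, rfl⟩, rfl⟩ := Submodule.mem_sup.1 hm
      rw [smul_add, hX, ← mul_smul, ← pow_succ']
      exact add_mem (hDmono (Nat.le_succ _) (ih p hp)) (hXU _ u hu)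
  -- `W n` is the kernel of multiplication by `x ^ n` from `U` onto `D (n + 1) / D n`.
  obtain ⟨W, hW⟩ : ∃ W : ℕ → Submodule A M, ∀ n m, m ∈ W n ↔ m ∈ U ∧ x ^ n • m ∈ D n := by
    refine ⟨fun n => U ⊓ (D n).comap (X n), fun n m => ?_⟩
    rw [Submodule.mem_inf, Submodule.mem_comap, hX]
  have hWU : ∀ n, W n ≤ U := fun n m hm => ((hW n m).1 hm).1
  have hWs : ∀ n, Stable s (W n) := fun n b hb m hm => by
    rw [hW] at hm ⊢
    exact ⟨hUs b hb m hm.1, smul_comm b (x ^ n) m ▸ hDs n b hb _ hm.2⟩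
  have hWg : ∀ n, IsGraded ℳ (W n) := fun n g m hm => by
    rw [hW] at hm ⊢
    exact ⟨hUg g m hm.1, (hx.pow n).proj_smul g m ▸ hDg n _ _ hm.2⟩
  have hWmono : Monotone W := monotone_nat_of_le_succ fun n m hm => by
    rw [hW] at hm ⊢
    refine ⟨hm.1, ?_⟩
    rw [pow_succ', mul_smul]
    exact hDx n _ hm.2
  have hWFF : ∀ n, GenericFree ℳ (W n) U := fun n => by
    have := (hmain (W n) (hWg n) (hWs n)).2 F hF hFh (Set.empty_subset _)
    rwa [sup_eq_right.2 (hWU n)] at this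
  obtain ⟨n₀, hn₀⟩ := gspan_stabilizes hsf hF hWmono hWs hWU
  choose a ha haW using hWFF
  obtain ⟨b, hb, hbP⟩ := h.2 F hF hFh hTF
  -- Only the finitely many submodules `W 0, …, W n₀` occur, so one denominator serves them all.
  let c := b * ∏ n ∈ Finset.range (n₀ + 1), a n
  have hcW : ∀ n ν, FreeAt c (W n) (U ⊓ ℳ ν) := by
    have hsmall : ∀ n ≤ n₀, ∀ ν, FreeAt c (W n) (U ⊓ ℳ ν) := fun n hn ν =>
      (haW n ν).of_dvd ((Finset.dvd_prod_of_mem a (Finset.mem_range.2 (by omega))).mul_left b)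
    intro n ν
    rcases le_total n n₀ with hn | hn
    · exact hsmall n hn ν
    · rw [← hn₀ n hn]
      exact hsmall n₀ le_rfl ν
  have hcD : ∀ n ν, FreeAt c (D n) (D (n + 1) ⊓ ℳ ν) := by
    intro n ν
    refine FreeAt.map (X n) (W := W n) (U := U) (L := ℳ (ν - n • d)) ?_ ?_ ?_ ?_ (hcW n _)
    rotate_left
    · exact fun m hm => hX n m ▸ ((hW n m).1 hm).2
    · exact fun m hm hm' => (hW n m).2 ⟨hm, hX n m ▸ hm'⟩
    rotate_left
    · rintro m ⟨hm, hmν⟩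
      rw [hX]
      have := (hx.pow n) _ m hmν
      rw [add_sub_cancel] at this
      exact ⟨hXU n m hm, this⟩
    · rintro m ⟨hm, hmν⟩
      rw [hDsucc] at hm
      obtain ⟨p, hp, _, ⟨u, hu, rfl⟩, rfl⟩ := Submodule.mem_sup.1 hm
      refine ⟨proj ℳ (ν - n • d) u, ⟨hUg _ u hu, proj_mem ℳ _ _⟩, ?_⟩
      rw [← proj_of_mem ℳ hmν, map_add, hX, hX, (hx.pow n).proj_smul', add_sub_cancel_right]
      exact hDg n ν p hp
  have hD1 : D 1 = K ⊔ U := by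
    rw [hDsucc, hD0]
    congr 1
    ext m
    simp [hX]
  have hPD : P ≤ D 1 := by
    rw [hD1]
    exact h.1.trans (sup_le_sup_left (gspan_mono_right s hTF) _)
  let N : ℕ → Submodule A M
    | 0 => P
    | n + 1 => D (n + 1)
  have hN : Monotone N := monotone_nat_of_le_succ (by
    rintro (_ | n)
    · exact hPD
    · exact hDmono (Nat.le_succ _))
  have hsup : ⨆ n, N n = K ⊔ gspan A (insert x s) F := by
    have hmem : ∀ {m}, m ∈ ⨆ n, N n ↔ ∃ n, m ∈ D (n + 1) := by
      intro m
      rw [Submodule.mem_iSup_of_directed _ hN.directed_le]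
      constructor
      · rintro ⟨_ | n, hn⟩
        · exact ⟨0, hPD hn⟩
        · exact ⟨n, hn⟩
      · rintro ⟨n, hn⟩
        exact ⟨n + 1, hn⟩
    have hDN : ∀ n, D (n + 1) ≤ ⨆ n, N n := fun n m hm => hmem.2 ⟨n, hm⟩
    apply le_antisymm
    · intro m hm
      obtain ⟨n, hn⟩ := hmem.1 hm
      have hDle : ∀ n, D n ≤ K ⊔ gspan A (insert x s) F := by
        intro n
        induction n with
        | zero => exact hD0 ▸ le_sup_left
        | succ n ih =>
          rw [hDsucc]
          refine sup_le ih (le_trans ?_ le_sup_right)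
          rintro _ ⟨u, hu, rfl⟩
          rw [hX]
          refine (stable_gspan A (insert x s) F).adjoin _
            (pow_mem (Algebra.subset_adjoin (Set.mem_insert _ _)) n) _
            (gspan_mono_left (Set.subset_insert _ _) F hu)
      exact hDle _ hn
    · refine sup_le (hD0 ▸ (hDmono (Nat.zero_le 1)).trans (hDN 0)) (gspan_le ?_ ?_)
      · intro y hy m hm
        obtain ⟨n, hn⟩ := hmem.1 hm
        rcases hy with rfl | hy
        · exact hmem.2 ⟨n + 1, hDx _ _ hn⟩
        · exact hmem.2 ⟨n, hDs _ y hy _ hn⟩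
      · intro m hm
        refine hmem.2 ⟨0, ?_⟩
        rw [hD1]
        exact Submodule.mem_sup_right (subset_gspan A s F hm)
  refine ⟨c, mul_ne_zero hb (Finset.prod_ne_zero_iff.2 fun n _ => ha n), fun ν => ?_⟩
  rw [← hsup]
  refine FreeAt.chain hN (ℳ ν) ?_
  rintro (_ | n)
  · have := (hbP ν).of_dvd (dvd_mul_right b (∏ n ∈ Finset.range (n₀ + 1), a n))
    rw [← hU, ← hD1] at this
    exact this
  · exact hcD (n + 1) ν

lemma stableFree [IsDomain A] [IsNoetherianRing A] {s : Set B} (hsf : s.Finite)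
    (hs : HomogAct ℳ s) : StableFree ℳ s := by
  induction s, hsf using Set.Finite.induction_on with
  | empty =>
    refine fun P hP _ => ⟨le_sup_left, fun F hF hFh _ => ?_⟩
    rw [gspan_empty]
    exact GenericFree.span hP hF hFh
  | @insert x s _ hsf ih =>
    have hs' := hs.mono (Set.subset_insert x s)
    obtain ⟨d, hd⟩ := hs x (Set.mem_insert _ _)
    exact fun P hP hPs => FreeOver.step hsf hs' hd (ih hs') hP hPs
      (ih hs' P hP (hPs.mono (Set.subset_insert _ _)))

lemma FreeOver.union [IsDomain A] [IsNoetherianRing A] {s t : Set B} (hsf : s.Finite)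
    (htf : t.Finite) (hst : HomogAct ℳ (t ∪ s)) {P K : Submodule A M} {T : Set M}
    (hK : IsGraded ℳ K) (hKs : Stable (t ∪ s) K)
    (h : FreeOver ℳ s P K T) : FreeOver ℳ (t ∪ s) P K T := by
  induction t, htf using Set.Finite.induction_on with
  | empty => rwa [Set.empty_union]
  | @insert x t _ htf ih =>
    rw [Set.insert_union] at hst hKs ⊢
    have hst' := hst.mono (Set.subset_insert x (t ∪ s))
    obtain ⟨d, hd⟩ := hst x (Set.mem_insert _ _)
    exact FreeOver.step (htf.union hsf) hst' hd (stableFree (htf.union hsf) hst') hK hKs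
      (ih hst' (hKs.mono (Set.subset_insert _ _)))

/-- Generic freeness of `M / (E + H)` in every degree, with `E = A[s]·TE` and `H` the `A`-span of
`TH`. -/
theorem genericFree_top [IsDomain A] [IsNoetherianRing A] {s t : Set B} (hsf : s.Finite)
    (htf : t.Finite) (hst : HomogAct ℳ (t ∪ s)) {TE TH TM : Set M} (hTE : TE.Finite) (hTEh : Homog ℳ TE)
    (hTH : TH.Finite) (hTHh : Homog ℳ TH) (hTM : TM.Finite) (hTMh : Homog ℳ TM)
    (htop : gspan A (t ∪ s) TM = ⊤) :
    GenericFree ℳ (gspan A s TE ⊔ Submodule.span A TH) ⊤ := by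
  have hs : HomogAct ℳ s := hst.mono Set.subset_union_right
  set E := gspan A s TE with hE
  have hEg : IsGraded ℳ E := isGraded_gspan hs hTEh
  have hPg : IsGraded ℳ (E ⊔ Submodule.span A TH) := hEg.sup (isGraded_span hTHh)
  have h0 : FreeOver ℳ (∅ : Set B) (E ⊔ Submodule.span A TH) E TH := by
    refine ⟨by rw [gspan_empty], fun F hF hFh hTF => ?_⟩
    have := GenericFree.span hPg hF hFh
    rw [sup_assoc, sup_eq_right.2 (Submodule.span_mono hTF : Submodule.span A TH ≤ _)] at this
    rwa [gspan_empty]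
  have h1 : FreeOver ℳ s (E ⊔ Submodule.span A TH) E TH := by
    have := h0.union Set.finite_empty hsf (by simpa using hs) hEg
      (by simpa using stable_gspan A s TE)
    simpa using this
  -- Once `F` contains the generators of `E`, the summand `E` of `E + S·F` is redundant.
  have h2 : FreeOver ℳ s (E ⊔ Submodule.span A TH) ⊥ (TE ∪ TH) := by
    have hab : ∀ F, TE ∪ TH ⊆ F → E ⊔ gspan A s F = ⊥ ⊔ gspan A s F := fun F hF => by
      rw [bot_sup_eq, sup_eq_right]
      exact gspan_mono_right s (Set.subset_union_left.trans hF)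
    refine ⟨?_, fun F hF hFh hTF => ?_⟩
    · rw [← hab _ subset_rfl]
      exact h1.1.trans (sup_le_sup_left (gspan_mono_right s Set.subset_union_right) _)
    · rw [← hab F hTF]
      exact h1.2 F hF hFh (Set.subset_union_right.trans hTF)
  have h3 := h2.union hsf htf hst (fun g m hm => by simp_all) (fun b _ m hm => by simp_all)
  have h4 := h3.2 (TM ∪ (TE ∪ TH)) (hTM.union (hTE.union hTH))
    (by rintro m (hm | hm | hm); exacts [hTMh m hm, hTEh m hm, hTHh m hm])
    Set.subset_union_right
  have h5 : gspan A (t ∪ s) (TM ∪ (TE ∪ TH)) = ⊤ :=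
    top_le_iff.1 (htop ▸ gspan_mono_right _ Set.subset_union_left)
  rwa [h5, sup_top_eq] at h4

end Main
end GenFree

open MvPolynomial

theorem generic_freeness_graded_components_subquotient
    (A : Type) [CommRing A] [IsNoetherianRing A] [IsDomain A]
    (G : Type) [AddCommGroup G] [DecidableEq G]
    (r : ℕ) (w : Fin r → G) (ψ : G →+ ℤ) (hψ : ∀ i, 0 < ψ (w i))
    -- `B ⊇ R`, a finitely generated `G`-graded `R`-algebra:
    (B : Type) [CommRing B] [Algebra A B]
    [Algebra (MvPolynomial (Fin r) A) B]
    [IsScalarTower A (MvPolynomial (Fin r) A) B]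
    [Algebra.FiniteType (MvPolynomial (Fin r) A) B]
    (hRB : Function.Injective (algebraMap (MvPolynomial (Fin r) A) B))
    (ℬ : G → Submodule A B) [GradedAlgebra ℬ]
    (halg : ∀ (g : G) (x : MvPolynomial (Fin r) A),
      x ∈ weightedHomogeneousSubmodule A w g →
        algebraMap (MvPolynomial (Fin r) A) B x ∈ ℬ g)
    -- `M`, a finitely generated `G`-graded `B`-module:
    (M : Type) [AddCommGroup M] [Module B M] [Module A M] [IsScalarTower A B M]
    [Module (MvPolynomial (Fin r) A) M]
    [IsScalarTower (MvPolynomial (Fin r) A) B M]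
    [IsScalarTower A (MvPolynomial (Fin r) A) M]
    [Module.Finite B M]
    (ℳ : G → Submodule A M) [DirectSum.Decomposition ℳ]
    [SetLike.GradedSMul ℬ ℳ]
    -- `E`, a finitely generated graded `R`-submodule of `M`:
    (E : Submodule (MvPolynomial (Fin r) A) M) (hEfg : E.FG)
    (hEgr : ∀ (g : G) (m : M), m ∈ E → (DirectSum.decompose ℳ m g : M) ∈ E)
    -- `H`, a finitely generated graded `A`-submodule of `M`:
    (H : Submodule A M) (hHfg : H.FG)
    (hHgr : ∀ (g : G) (m : M), m ∈ H → (DirectSum.decompose ℳ m g : M) ∈ H) :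
    -- conclusion about `𝔐 = M / (E + H)`:
    ∃ a : A, a ≠ 0 ∧ ∀ ν : G,
      Module.Free (Localization.Away a)
        (LocalizedModule (Submonoid.powers a)
          ↥(Submodule.map (Submodule.restrictScalars A E ⊔ H).mkQ (ℳ ν))) := by
  classical
  have hR : ∀ p : MvPolynomial (Fin r) A, algebraMap (MvPolynomial (Fin r) A) B p ∈
      Algebra.adjoin A (Set.range fun i => algebraMap (MvPolynomial (Fin r) A) B (X i)) := by
    intro p
    have hp : p ∈ Algebra.adjoin A (Set.range (X : Fin r → MvPolynomial (Fin r) A)) := by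
      rw [MvPolynomial.adjoin_range_X]; trivial
    have h := Subalgebra.mem_map.2
      ⟨p, hp, (rfl : IsScalarTower.toAlgHom A (MvPolynomial (Fin r) A) B p = _)⟩
    rw [AlgHom.map_adjoin, ← Set.range_comp] at h
    exact h
  set s : Set B := Set.range fun i => algebraMap (MvPolynomial (Fin r) A) B (X i) with hs
  have hsf : s.Finite := Set.finite_range _
  have hdeg : ∀ {b : B} {d : G}, b ∈ ℬ d → GenFree.HasDegree ℳ b d := fun hb _ _ hm =>
    SetLike.GradedSMul.smul_mem hb hm
  have hsh : GenFree.HomogAct ℳ s := by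
    rintro _ ⟨i, rfl⟩
    exact ⟨w i, hdeg (halg _ _ ((mem_weightedHomogeneousSubmodule _ _ _ _).2
      (isWeightedHomogeneous_X A w i)))⟩
  -- Homogeneous algebra generators of `B` over `A`.
  obtain ⟨t, htf, hth, htop⟩ : ∃ t : Set B, t.Finite ∧ GenFree.HomogAct ℳ t ∧
      Algebra.adjoin A t = ⊤ := by
    have : Algebra.FiniteType A B :=
      Algebra.FiniteType.trans (S := MvPolynomial (Fin r) A) inferInstance inferInstance
    obtain ⟨t₀, ht₀⟩ := this.out
    obtain ⟨t, htf, hth, hspan, -⟩ := GenFree.exists_homog (ℳ := ℬ) t₀.finite_toSet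
    refine ⟨t, htf, fun b hb => (hth b hb).imp fun d hd => hdeg hd, top_le_iff.1 ?_⟩
    rw [← ht₀]
    exact Algebra.adjoin_le (hspan.trans (Algebra.span_le_adjoin A t))
  -- Homogeneous generators of `M`, `E` and `H`.
  obtain ⟨M₀, hM₀⟩ := (Module.Finite.fg_top : (⊤ : Submodule B M).FG)
  obtain ⟨TM, hTM, hTMh, hTMspan, -⟩ := GenFree.exists_homog (ℳ := ℳ) M₀.finite_toSet
  have hMtop : GenFree.gspan A (t ∪ s) TM = ⊤ := by
    have hst := (GenFree.stable_gspan A (t ∪ s) TM).adjoin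
    have hadj : Algebra.adjoin A (t ∪ s) = ⊤ :=
      top_le_iff.1 (htop ▸ Algebra.adjoin_mono Set.subset_union_left)
    rw [hadj] at hst
    refine top_le_iff.1 fun m _ => ?_
    have hm : m ∈ Submodule.span B (M₀ : Set M) := hM₀ ▸ Submodule.mem_top
    induction hm using Submodule.span_induction with
    | mem m hm => exact Submodule.span_le.2 (GenFree.subset_gspan A _ TM) (hTMspan hm)
    | zero => exact zero_mem _
    | add m m' _ _ h h' => exact add_mem (h trivial) (h' trivial)
    | smul b m _ h => exact hst b trivial m (h trivial)
  obtain ⟨E₀, hE₀⟩ := hEfg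
  obtain ⟨TE, hTE, hTEh, hTEspan, hTEle⟩ := GenFree.exists_homog (ℳ := ℳ) E₀.finite_toSet
  have hEeq : Submodule.restrictScalars A E = GenFree.gspan A s TE := by
    apply le_antisymm
    · intro m hm
      rw [Submodule.restrictScalars_mem, ← hE₀] at hm
      induction hm using Submodule.span_induction with
      | mem m hm => exact Submodule.span_le.2 (GenFree.subset_gspan A _ TE) (hTEspan hm)
      | zero => exact zero_mem _
      | add m m' _ _ h h' => exact add_mem h h'
      | smul p m _ h =>
        rw [← algebraMap_smul B p m]
        exact (GenFree.stable_gspan A s TE).adjoin _ (hR p) m h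
    · refine GenFree.gspan_le ?_ (hTEle _ hEgr ?_)
      · rintro _ ⟨i, rfl⟩ m hm
        rw [algebraMap_smul]
        exact E.smul_mem _ hm
      · rw [← hE₀]
        exact Submodule.subset_span
  obtain ⟨H₀, hH₀⟩ := hHfg
  obtain ⟨TH, hTH, hTHh, hTHspan, hTHle⟩ := GenFree.exists_homog (ℳ := ℳ) H₀.finite_toSet
  have hHeq : H = Submodule.span A TH := by
    apply le_antisymm
    · rw [← hH₀]
      exact Submodule.span_le.2 hTHspan
    · exact Submodule.span_le.2 (hTHle H hHgr (hH₀ ▸ Submodule.subset_span))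
  obtain ⟨a, ha, hfree⟩ := GenFree.genericFree_top hsf htf
    (by rintro b (hb | hb); exacts [hth b hb, hsh b hb]) hTE hTEh hTH hTHh hTM hTMh hMtop
  refine ⟨a, ha, fun ν => ?_⟩
  have h := hfree ν
  rw [top_inf_eq, ← hEeq, ← hHeq] at h
  exact h.free_localizedModule
end
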